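/- Let E₀ > 0, let σ̂₁ : Ḡ×I'×I → ℝ be continuous and C¹ in its second (primed) variable with continuous derivative, let 0 < α < 1, 0 < β < 1, and let ψ : Ḡ×S×I → ℝ be continuous, α-Hölder in ω ∈ S uniformly and β-Hölder in E uniformly (ψ ∈ C(Ḡ×I, C^α(S)) ∩ C(Ḡ×S, C^β(I))). Then there exists u ∈ C(Ḡ×S×I) such that for all (x,ω,E) ∈ Ḡ×S×I with E < E_m: p.f.∫_E^{E_m} (1/(E'−E))·σ̂₁(x,E',E)·( ∫_0^{2π} ψ(x, γ(E',E,ω)(s), E') ds ) dE' = 2π·log(E_m−E)·σ̂₁(x,E,E)·ψ(x,ω,E) + u(x,ω,E). -/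

import Mathlib

open MeasureTheory Filter Set Metric
open scoped Topology Real

noncomputable section

abbrev E3 : Type := EuclideanSpace ℝ (Fin 3)

/-- The vector `(a,b,c) ∈ ℝ³` as an element of `EuclideanSpace ℝ (Fin 3)`. -/
def vec3 (a b c : ℝ) : E3 := (EuclideanSpace.equiv (Fin 3) ℝ).symm ![a, b, c]

/-- The third standard basis vector `e₃`. -/
def e₃ : E3 := EuclideanSpace.single 2 1

/-- `μ(E',E) = √( E(E'+2) / (E'(E+2)) )`. -/
def mu (E' E : ℝ) : ℝ := Real.sqrt (E * (E' + 2) / (E' * (E + 2)))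

/-- The parametrization `γ(E',E,ω)(s)` of the circle `{ω' ∈ S : ω'·ω = μ(E',E)}`. -/
def gam (R : E3 → (E3 ≃ₗᵢ[ℝ] E3)) (E' E : ℝ) (ω : E3) (s : ℝ) : E3 :=
  R ω (vec3 (Real.sqrt (1 - mu E' E ^ 2) * Real.cos s)
        (Real.sqrt (1 - mu E' E ^ 2) * Real.sin s) (mu E' E))

/-- Hadamard finite part of order 1 with upper limit `b`. -/
def HasPF1Upper (g : ℝ → ℝ) (x b L : ℝ) : Prop :=
  Tendsto (fun ε : ℝ => (∫ t in (x + ε)..b, g t / (t - x)) + g x * Real.log ε)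
    (𝓝[>] (0 : ℝ)) (𝓝 L)

theorem e₃_eq_vec3 : e₃ = vec3 0 0 1 := by
  ext i
  fin_cases i <;> simp [e₃, vec3]

theorem eq_vec3 (v : E3) : v = vec3 (v 0) (v 1) (v 2) := by
  ext i
  fin_cases i <;> rfl

theorem inner_vec3 (a b c a' b' c' : ℝ) :
    inner ℝ (vec3 a b c) (vec3 a' b' c') = a * a' + b * b' + c * c' := by
  simp [vec3, PiLp.inner_apply, Fin.sum_univ_three]
  ring

theorem norm_vec3_sq (a b c : ℝ) : ‖vec3 a b c‖ ^ 2 = a ^ 2 + b ^ 2 + c ^ 2 := by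
  rw [← real_inner_self_eq_norm_sq, inner_vec3]
  ring

theorem vec3_eq_smul_add (a b c : ℝ) :
    vec3 a b c = a • vec3 1 0 0 + b • vec3 0 1 0 + c • vec3 0 0 1 := by
  ext i
  fin_cases i <;> simp [vec3]

theorem continuousWithinAt_vec3 {X : Type*} [TopologicalSpace X] {f g h : X → ℝ} {s : Set X} {x : X}
    (hf : ContinuousWithinAt f s x) (hg : ContinuousWithinAt g s x)
    (hh : ContinuousWithinAt h s x) :
    ContinuousWithinAt (fun y => vec3 (f y) (g y) (h y)) s x := by
  unfold vec3
  refine (EuclideanSpace.equiv (Fin 3) ℝ).symm.continuous.continuousAt.comp_continuousWithinAt ?_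
  refine continuousWithinAt_pi.2 fun i => ?_
  fin_cases i
  exacts [hf, hg, hh]

/-- A unit vector of the plane is `(cos θ, sin θ)` for some `θ`. -/
theorem exists_cos_sin_eq {p q : ℝ} (h : p ^ 2 + q ^ 2 = 1) :
    ∃ θ : ℝ, Real.cos θ = p ∧ Real.sin θ = q := by
  have hn : ‖(⟨p, q⟩ : ℂ)‖ = 1 := by
    rw [Complex.norm_def, Complex.normSq_mk, ← sq, ← sq, h, Real.sqrt_one]
  have h0 : (⟨p, q⟩ : ℂ) ≠ 0 := by
    intro h0
    simp [h0] at hn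
  exact ⟨Complex.arg ⟨p, q⟩, by rw [Complex.cos_arg h0, hn, div_one],
    by rw [Complex.sin_arg, hn, div_one]⟩

/-- An isometry of `ℝ³` fixing `e₃` rotates or reflects the horizontal circles. -/
theorem exists_angle_of_map_e₃ (T : E3 ≃ₗᵢ[ℝ] E3) (hT : T e₃ = e₃) :
    ∃ θ : ℝ, (∀ a b s : ℝ, T (vec3 (a * Real.cos s) (a * Real.sin s) b) =
        vec3 (a * Real.cos (s + θ)) (a * Real.sin (s + θ)) b) ∨
      (∀ a b s : ℝ, T (vec3 (a * Real.cos s) (a * Real.sin s) b) =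
        vec3 (a * Real.cos (θ - s)) (a * Real.sin (θ - s)) b) := by
  rw [e₃_eq_vec3] at hT
  obtain ⟨p, q, z, hpq⟩ : ∃ p q z, T (vec3 1 0 0) = vec3 p q z := ⟨_, _, _, eq_vec3 _⟩
  obtain ⟨p', q', z', hpq'⟩ : ∃ p q z, T (vec3 0 1 0) = vec3 p q z := ⟨_, _, _, eq_vec3 _⟩
  have h11 := T.inner_map_map (vec3 1 0 0) (vec3 1 0 0)
  have h12 := T.inner_map_map (vec3 1 0 0) (vec3 0 1 0)
  have h22 := T.inner_map_map (vec3 0 1 0) (vec3 0 1 0)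
  have h13 := T.inner_map_map (vec3 1 0 0) (vec3 0 0 1)
  have h23 := T.inner_map_map (vec3 0 1 0) (vec3 0 0 1)
  simp only [hpq, hpq', hT, inner_vec3] at h11 h12 h22 h13 h23
  have hz : z = 0 := by linarith
  have hz' : z' = 0 := by linarith
  subst hz hz'
  obtain ⟨θ, rfl, rfl⟩ := exists_cos_sin_eq (p := p) (q := q) (by linarith)
  have hcs := Real.cos_sq_add_sin_sq θ
  have hvec : ∀ a b s : ℝ, T (vec3 (a * Real.cos s) (a * Real.sin s) b) =
      vec3 (a * Real.cos s * Real.cos θ + a * Real.sin s * p')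
        (a * Real.cos s * Real.sin θ + a * Real.sin s * q') b := by
    intro a b s
    rw [vec3_eq_smul_add, map_add, map_add, map_smul, map_smul, map_smul, hpq, hpq', hT]
    ext i
    fin_cases i <;> simp [vec3]
  refine ⟨θ, ?_⟩
  set d := Real.cos θ * q' - Real.sin θ * p' with hd
  have hp' : p' = -Real.sin θ * d := by
    rw [hd]
    linear_combination (-p') * hcs + Real.cos θ * h12
  have hq' : q' = Real.cos θ * d := by
    rw [hd]
    linear_combination (-q') * hcs + Real.sin θ * h12
  have hd2 : d ^ 2 = 1 := by
    have h : p' ^ 2 + q' ^ 2 = 1 := by linarith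
    rw [hp', hq'] at h
    linear_combination h - d ^ 2 * hcs
  rcases sq_eq_one_iff.1 hd2 with h | h
  · left
    intro a b s
    rw [hvec, hp', hq', h, Real.cos_add, Real.sin_add]
    congr 1 <;> ring
  · right
    intro a b s
    rw [hvec, hp', hq', h, Real.cos_sub, Real.sin_sub]
    congr 1 <;> ring

/-- The circle average depends on the frame only through the image of `e₃`. -/
theorem integral_circle_eq_of_map_e₃_eq (A B : E3 ≃ₗᵢ[ℝ] E3) (h : A e₃ = B e₃) (f : E3 → ℝ)
    (a b : ℝ) :
    ∫ s in (0 : ℝ)..(2 * π), f (A (vec3 (a * Real.cos s) (a * Real.sin s) b)) =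
      ∫ s in (0 : ℝ)..(2 * π), f (B (vec3 (a * Real.cos s) (a * Real.sin s) b)) := by
  set F : ℝ → ℝ := fun s => f (B (vec3 (a * Real.cos s) (a * Real.sin s) b)) with hF
  have hper : Function.Periodic F (2 * π) := fun s => by
    simp only [hF, Real.cos_add_two_pi, Real.sin_add_two_pi]
  have hshift : ∀ t, ∫ s in t..(t + 2 * π), F s = ∫ s in (0 : ℝ)..(2 * π), F s := fun t => by
    simpa using hper.intervalIntegral_add_eq t 0
  have hAB : ∀ v, A v = B (A.trans B.symm v) := fun v => by simp
  obtain ⟨θ, hθ | hθ⟩ := exists_angle_of_map_e₃ (A.trans B.symm) (by simp [h])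
  · simp only [hAB, hθ]
    change ∫ s in (0 : ℝ)..(2 * π), F (s + θ) = _
    rw [intervalIntegral.integral_comp_add_right, zero_add, add_comm (2 * π), hshift]
  · simp only [hAB, hθ]
    change ∫ s in (0 : ℝ)..(2 * π), F (θ - s) = _
    rw [intervalIntegral.integral_comp_sub_left, sub_zero, ← hshift (θ - 2 * π), sub_add_cancel]

/-- The rotation taking the unit vector `a` to the unit vector `b ≠ -a`, as a product of two
reflections in lines. -/
def rotTo (a b : E3) : E3 ≃ₗᵢ[ℝ] E3 :=
  (Submodule.span ℝ {a}).reflection.trans (Submodule.span ℝ {a + b}).reflection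

theorem rotTo_apply_self {a b : E3} (ha : ‖a‖ = 1) (hb : ‖b‖ = 1) (hab : a + b ≠ 0) :
    rotTo a b a = b := by
  have hn : ‖a + b‖ ^ 2 = 2 * inner ℝ (a + b) a := by
    rw [norm_add_sq_real, inner_add_left, real_inner_self_eq_norm_sq, ha, hb,
      real_inner_comm a b]
    ring
  have h0 : ‖a + b‖ ^ 2 ≠ 0 := by simpa using hab
  have h1 : (Submodule.span ℝ {a}).reflection a = a :=
    Submodule.reflection_mem_subspace_eq_self (Submodule.mem_span_singleton_self a)
  rw [rotTo, LinearIsometryEquiv.trans_apply, h1, Submodule.reflection_singleton_apply,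
    ← Nat.cast_smul_eq_nsmul ℝ, smul_smul]
  have h2 : ((2 : ℕ) : ℝ) * (inner ℝ (a + b) a / ((‖a + b‖ : ℝ) ^ 2)) = 1 := by
    rw [← mul_div_assoc, Nat.cast_ofNat, ← hn, div_self h0]
  rw [RCLike.ofReal_real_eq_id, id, h2, one_smul, add_sub_cancel_left]

theorem continuousAt_rotTo {a b v : E3} (hab : a + b ≠ 0) :
    ContinuousAt (fun p : E3 × E3 => rotTo a p.1 p.2) (b, v) := by
  have h0 : ((‖a + b‖ : ℝ) ^ 2) ≠ 0 := by simpa using hab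
  simp only [rotTo, LinearIsometryEquiv.trans_apply,
    Submodule.reflection_singleton_apply (a + _)]
  have h1 : ContinuousAt (fun p : E3 × E3 => (Submodule.span ℝ {a}).reflection p.2) (b, v) :=
    ((LinearIsometryEquiv.continuous _).comp continuous_snd).continuousAt
  have h2 : ContinuousAt (fun p : E3 × E3 => a + p.1) (b, v) := by fun_prop
  exact (((((h2.inner (𝕜 := ℝ) h1).div (h2.norm.pow 2) h0)).smul h2).const_smul 2).sub h1

theorem mu_self {E : ℝ} (hE : 0 < E) : mu E E = 1 := by
  rw [mu, div_self (by positivity), Real.sqrt_one]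

theorem mu_nonneg (E' E : ℝ) : 0 ≤ mu E' E := Real.sqrt_nonneg _

theorem one_sub_mu_sq {E' E : ℝ} (hE : 0 < E) (hE' : 0 < E') :
    1 - mu E' E ^ 2 = 2 * (E' - E) / (E' * (E + 2)) := by
  rw [mu, Real.sq_sqrt (by positivity)]
  field_simp
  ring

theorem one_sub_mu_sq_nonneg {E' E : ℝ} (hE : 0 < E) (hEE' : E ≤ E') : 0 ≤ 1 - mu E' E ^ 2 := by
  have hE' := hE.trans_le hEE'
  rw [one_sub_mu_sq hE hE']
  have := sub_nonneg.2 hEE'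
  positivity

theorem continuousAt_mu {E' E : ℝ} (hE : 0 < E) (hE' : 0 < E') :
    ContinuousAt (fun p : ℝ × ℝ => mu p.1 p.2) (E', E) := by
  unfold mu
  refine Real.continuous_sqrt.continuousAt.comp (ContinuousAt.div ?_ ?_ (by positivity)) <;>
    fun_prop

theorem gam_self {R : E3 → (E3 ≃ₗᵢ[ℝ] E3)} {ω : E3} (hR : R ω e₃ = ω) {E : ℝ} (hE : 0 < E)
    (s : ℝ) : gam R E E ω s = ω := by
  simp [gam, mu_self hE, ← e₃_eq_vec3, hR]

theorem norm_gam (R : E3 → (E3 ≃ₗᵢ[ℝ] E3)) (ω : E3) {E' E : ℝ} (hE : 0 < E) (hEE' : E ≤ E')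
    (s : ℝ) : ‖gam R E' E ω s‖ = 1 := by
  rw [gam, LinearIsometryEquiv.norm_map, ← sq_eq_sq₀ (norm_nonneg _) zero_le_one, norm_vec3_sq,
    mul_pow, mul_pow, Real.sq_sqrt (one_sub_mu_sq_nonneg hE hEE')]
  linear_combination (1 - mu E' E ^ 2) * Real.cos_sq_add_sin_sq s

theorem norm_gam_sub_le {R : E3 → (E3 ≃ₗᵢ[ℝ] E3)} {ω : E3} (hR : R ω e₃ = ω) {E₀ E' E : ℝ}
    (hE₀ : 0 < E₀) (hE : E₀ ≤ E) (hEE' : E ≤ E') (s : ℝ) :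
    ‖gam R E' E ω s - ω‖ ≤ (2 / E₀ * (E' - E)) ^ (1 / 2 : ℝ) := by
  have hE0 := hE₀.trans_le hE
  have hE'0 := hE0.trans_le hEE'
  rw [← Real.sqrt_eq_rpow]
  refine Real.le_sqrt_of_sq_le ?_
  have h1 : gam R E' E ω s - ω = R ω (vec3 (Real.sqrt (1 - mu E' E ^ 2) * Real.cos s)
      (Real.sqrt (1 - mu E' E ^ 2) * Real.sin s) (mu E' E - 1)) := by
    nth_rewrite 2 [← hR]
    rw [gam, ← map_sub, e₃_eq_vec3]
    congr 1
    ext i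
    fin_cases i <;> simp [vec3]
  have hnn := one_sub_mu_sq_nonneg hE0 hEE'
  rw [h1, LinearIsometryEquiv.norm_map, norm_vec3_sq, mul_pow, mul_pow, Real.sq_sqrt hnn]
  have h2 : (1 - mu E' E ^ 2) * Real.cos s ^ 2 + (1 - mu E' E ^ 2) * Real.sin s ^ 2 +
      (mu E' E - 1) ^ 2 = 2 * (1 - mu E' E) := by
    linear_combination (1 - mu E' E ^ 2) * Real.cos_sq_add_sin_sq s
  have h3 : 1 - mu E' E ≤ 1 - mu E' E ^ 2 := by
    have := mu_nonneg E' E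
    nlinarith
  have h4 : 1 - mu E' E ^ 2 ≤ 1 / E₀ * (E' - E) := by
    rw [one_sub_mu_sq hE0 hE'0, mul_div_assoc, mul_comm, div_mul_eq_mul_div, div_mul_eq_mul_div,
      div_le_div_iff₀ (by positivity) hE₀]
    have : 0 ≤ E' - E := sub_nonneg.2 hEE'
    have h5 : 2 * E₀ ≤ E' * (E + 2) := by nlinarith
    nlinarith
  rw [h2]
  calc 2 * (1 - mu E' E) ≤ 2 * (1 / E₀ * (E' - E)) := by linarith
    _ = 2 / E₀ * (E' - E) := by ring

/-- The finite part as a logarithm plus an absolutely convergent integral over `[0, 1]`. -/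
theorem hasPF1Upper_of_intervalIntegrable {g : ℝ → ℝ} {a b : ℝ} (hab : a < b)
    (hint : IntervalIntegrable (fun r => (g (a + r * (b - a)) - g a) / r) volume 0 1) :
    HasPF1Upper g a b
      (g a * Real.log (b - a) + ∫ r in (0 : ℝ)..1, (g (a + r * (b - a)) - g a) / r) := by
  set F : ℝ → ℝ := fun r => (g (a + r * (b - a)) - g a) / r with hF
  have hd : 0 < b - a := sub_pos.2 hab
  have hprim : Tendsto (fun δ => ∫ r in δ..1, F r) (𝓝[>] 0) (𝓝 (∫ r in (0 : ℝ)..1, F r)) := by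
    have hcont := intervalIntegral.continuousOn_primitive_interval_left (a := 0) (b := 1) (f := F)
      (μ := volume) ((intervalIntegrable_iff' (by finiteness)).1 hint)
    have h0 := hcont 0 left_mem_uIcc
    rw [uIcc_of_le zero_le_one] at h0
    exact (h0.mono_of_mem_nhdsWithin (Icc_mem_nhdsGT one_pos)).tendsto
  have hscale : Tendsto (fun ε : ℝ => ε / (b - a)) (𝓝[>] 0) (𝓝[>] 0) := by
    refine tendsto_nhdsWithin_iff.2 ⟨?_, ?_⟩
    · have : Tendsto (fun ε : ℝ => ε / (b - a)) (𝓝 0) (𝓝 (0 / (b - a))) :=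
        (continuous_id.div_const _).tendsto 0
      rw [zero_div] at this
      exact this.mono_left nhdsWithin_le_nhds
    · filter_upwards [self_mem_nhdsWithin] with ε hε using div_pos hε hd
  refine ((hprim.comp hscale).const_add (g a * Real.log (b - a))).congr' ?_
  filter_upwards [Ioo_mem_nhdsGT hd] with ε hε
  have hδ : 0 < ε / (b - a) := div_pos hε.1 hd
  have hδ1 : ε / (b - a) ≤ 1 := (div_le_one hd).2 hε.2.le
  have hsub := intervalIntegral.mul_integral_comp_mul_add (a := ε / (b - a)) (b := 1)
    (f := fun t => g t / (t - a)) (c := b - a) (d := a)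
  rw [mul_div_cancel₀ _ hd.ne', mul_one, sub_add_cancel, add_comm ε a] at hsub
  have hmem : ∀ r ∈ uIcc (ε / (b - a)) 1, 0 < r := fun r hr => by
    rw [uIcc_of_le hδ1] at hr
    exact hδ.trans_le hr.1
  have hFint : IntervalIntegrable F volume (ε / (b - a)) 1 := hint.mono_set (by
    rw [uIcc_of_le hδ1, uIcc_of_le zero_le_one]
    exact Icc_subset_Icc_left hδ.le)
  have hinv : IntervalIntegrable (fun r : ℝ => g a * r⁻¹) volume (ε / (b - a)) 1 :=
    (intervalIntegral.intervalIntegrable_inv (fun r hr => (hmem r hr).ne')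
      continuousOn_id).const_mul _
  have hsplit : ∫ t in (a + ε)..b, g t / (t - a) =
      (∫ r in (ε / (b - a))..1, F r) + ∫ r in (ε / (b - a))..1, g a * r⁻¹ := by
    rw [← intervalIntegral.integral_add hFint hinv, ← hsub,
      ← intervalIntegral.integral_const_mul]
    refine intervalIntegral.integral_congr fun r hr => ?_
    have hr0 := (hmem r hr).ne'
    have hd0 := hd.ne'
    simp only [hF]
    rw [add_sub_cancel_right, show (b - a) * r + a = a + r * (b - a) by ring]
    field_simp
    ring
  rw [hsplit, intervalIntegral.integral_const_mul, integral_inv_of_pos hδ one_pos, one_div,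
    Real.log_inv, Real.log_div hε.1.ne' hd.ne']
  simp only [Function.comp_apply]
  ring

section CircleAverage

variable {K : Set E3} {E₀ Em : ℝ} {ψ : E3 → E3 → ℝ → ℝ}

theorem continuous_comp_circle
    (hψc : ContinuousOn (fun p : E3 × E3 × ℝ => ψ p.1 p.2.1 p.2.2)
      (K ×ˢ sphere (0 : E3) 1 ×ˢ Set.Icc E₀ Em)) (A : E3 ≃ₗᵢ[ℝ] E3) {x : E3} (hx : x ∈ K)
    {t : ℝ} (ht : t ∈ Icc E₀ Em) {a b : ℝ} (hab : a ^ 2 + b ^ 2 = 1) :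
    Continuous fun s => ψ x (A (vec3 (a * Real.cos s) (a * Real.sin s) b)) t := by
  refine hψc.comp_continuous (f := fun s : ℝ =>
    ((x, A (vec3 (a * Real.cos s) (a * Real.sin s) b), t) : E3 × E3 × ℝ)) ?_ fun s => ⟨hx, ?_, ht⟩
  · refine continuous_const.prodMk ((A.continuous.comp ?_).prodMk continuous_const)
    rw [← continuousOn_univ]
    intro s _
    exact continuousWithinAt_vec3 (by fun_prop) (by fun_prop) (by fun_prop)
  · rw [mem_sphere_zero_iff_norm, LinearIsometryEquiv.norm_map,
      ← sq_eq_sq₀ (norm_nonneg _) zero_le_one, norm_vec3_sq]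
    linear_combination hab + a ^ 2 * Real.cos_sq_add_sin_sq s

theorem continuous_comp_gam
    (hψc : ContinuousOn (fun p : E3 × E3 × ℝ => ψ p.1 p.2.1 p.2.2)
      (K ×ˢ sphere (0 : E3) 1 ×ˢ Set.Icc E₀ Em)) (hE₀ : 0 < E₀) (R : E3 → (E3 ≃ₗᵢ[ℝ] E3))
    {x : E3} (hx : x ∈ K) (ω : E3) {E t : ℝ} (hE : E₀ ≤ E) (hEt : E ≤ t) (ht : t ≤ Em) :
    Continuous fun s => ψ x (gam R t E ω s) t :=
  continuous_comp_circle hψc (R ω) hx ⟨hE.trans hEt, ht⟩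
    (by rw [Real.sq_sqrt (one_sub_mu_sq_nonneg (hE₀.trans_le hE) hEt)]; ring)

/-- The circle integral of a continuous function is jointly continuous, whatever the frame. -/
theorem continuousOn_integral_gam
    (hψc : ContinuousOn (fun p : E3 × E3 × ℝ => ψ p.1 p.2.1 p.2.2)
      (K ×ˢ sphere (0 : E3) 1 ×ˢ Set.Icc E₀ Em)) (hE₀ : 0 < E₀) {N : ℝ}
    (hN : ∀ x ∈ K, ∀ ω ∈ sphere (0 : E3) 1, ∀ E ∈ Icc E₀ Em, |ψ x ω E| ≤ N)
    (R : E3 → (E3 ≃ₗᵢ[ℝ] E3)) (hR : ∀ ω : E3, ‖ω‖ = 1 → R ω e₃ = ω) :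
    ContinuousOn (fun p : E3 × E3 × ℝ × ℝ =>
        ∫ s in (0 : ℝ)..(2 * π), ψ p.1 (gam R p.2.2.2 p.2.2.1 p.2.1 s) p.2.2.2)
      {p | p.1 ∈ K ∧ p.2.1 ∈ sphere (0 : E3) 1 ∧ E₀ ≤ p.2.2.1 ∧ p.2.2.1 ≤ p.2.2.2 ∧
        p.2.2.2 ≤ Em} := by
  set D : Set (E3 × E3 × ℝ × ℝ) := {p | p.1 ∈ K ∧ p.2.1 ∈ sphere (0 : E3) 1 ∧ E₀ ≤ p.2.2.1 ∧
    p.2.2.1 ≤ p.2.2.2 ∧ p.2.2.2 ≤ Em}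
  rintro ⟨x₀, ω₀, E₁, t₁⟩ hp₀
  obtain ⟨hx₀, hω₀, hE₁, hEt₁, ht₁⟩ := id hp₀
  simp only at hx₀ hω₀ hE₁ hEt₁ ht₁
  have hω₀n : ‖ω₀‖ = 1 := mem_sphere_zero_iff_norm.1 hω₀
  have hω₀0 : ω₀ + ω₀ ≠ 0 := by
    rw [← two_smul ℝ ω₀]
    exact smul_ne_zero two_ne_zero (norm_pos_iff.1 (by rw [hω₀n]; exact one_pos))
  set J : E3 × E3 × ℝ × ℝ → ℝ → E3 := fun p s => rotTo ω₀ p.2.1 (gam R p.2.2.2 p.2.2.1 ω₀ s)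
    with hJ
  have hJmem : ∀ p ∈ D, ∀ s, J p s ∈ sphere (0 : E3) 1 := fun p hp s => by
    rw [mem_sphere_zero_iff_norm, hJ, LinearIsometryEquiv.norm_map,
      norm_gam R ω₀ (hE₀.trans_le hp.2.2.1) hp.2.2.2.1]
  have hne : ∀ᶠ p : E3 × E3 × ℝ × ℝ in 𝓝[D] (x₀, ω₀, E₁, t₁), ω₀ + p.2.1 ≠ 0 := by
    refine nhdsWithin_le_nhds (ContinuousAt.eventually_ne ?_ hω₀0)
    fun_prop
  have hD_ev : ∀ᶠ p in 𝓝[D] (x₀, ω₀, E₁, t₁), p ∈ D := self_mem_nhdsWithin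
  have hEq : ∀ p ∈ D, ω₀ + p.2.1 ≠ 0 →
      ∫ s in (0 : ℝ)..(2 * π), ψ p.1 (gam R p.2.2.2 p.2.2.1 p.2.1 s) p.2.2.2 =
        ∫ s in (0 : ℝ)..(2 * π), ψ p.1 (J p s) p.2.2.2 := fun p hp hp0 => by
    have hωn : ‖p.2.1‖ = 1 := mem_sphere_zero_iff_norm.1 hp.2.1
    refine integral_circle_eq_of_map_e₃_eq (R p.2.1) ((R ω₀).trans (rotTo ω₀ p.2.1)) ?_
      (fun v => ψ p.1 v p.2.2.2) _ _
    rw [LinearIsometryEquiv.trans_apply, hR _ hωn, hR _ hω₀n, rotTo_apply_self hω₀n hωn hp0]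
  refine ContinuousWithinAt.congr_of_eventuallyEq
    (f := fun p => ∫ s in (0 : ℝ)..(2 * π), ψ p.1 (J p s) p.2.2.2) ?_ ?_ (hEq _ hp₀ hω₀0)
  · refine intervalIntegral.continuousWithinAt_of_dominated_interval (bound := fun _ => N) ?_ ?_
      intervalIntegrable_const ?_
    · filter_upwards [hD_ev] with p hp
      refine Continuous.aestronglyMeasurable ?_
      exact continuous_comp_circle hψc ((R ω₀).trans (rotTo ω₀ p.2.1)) hp.1
        ⟨hp.2.2.1.trans hp.2.2.2.1, hp.2.2.2.2⟩
        (by rw [Real.sq_sqrt (one_sub_mu_sq_nonneg (hE₀.trans_le hp.2.2.1) hp.2.2.2.1)]; ring)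
    · filter_upwards [hD_ev] with p hp
      exact .of_forall fun s _ =>
        hN _ hp.1 _ (hJmem p hp s) _ ⟨hp.2.2.1.trans hp.2.2.2.1, hp.2.2.2.2⟩
    · refine .of_forall fun s _ => ?_
      have hmu : ContinuousAt (fun p : E3 × E3 × ℝ × ℝ => mu p.2.2.2 p.2.2.1)
          (x₀, ω₀, E₁, t₁) :=
        ContinuousAt.comp (f := fun p : E3 × E3 × ℝ × ℝ => (p.2.2.2, p.2.2.1))
          (g := fun p : ℝ × ℝ => mu p.1 p.2)
          (continuousAt_mu (hE₀.trans_le hE₁) (hE₀.trans_le (hE₁.trans hEt₁))) (by fun_prop)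
      have hgam : ContinuousWithinAt
          (fun p : E3 × E3 × ℝ × ℝ => gam R p.2.2.2 p.2.2.1 ω₀ s) D (x₀, ω₀, E₁, t₁) := by
        have hmu' := hmu.continuousWithinAt (s := D)
        have hsqrt := (continuousWithinAt_const (b := (1 : ℝ))).sub (hmu'.pow 2) |>.sqrt
        exact (R ω₀).continuous.continuousAt.comp_continuousWithinAt
          (continuousWithinAt_vec3 (hsqrt.mul continuousWithinAt_const)
            (hsqrt.mul continuousWithinAt_const) hmu')
      have hJc : ContinuousWithinAt (fun p => J p s) D (x₀, ω₀, E₁, t₁) :=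
        ContinuousAt.comp_continuousWithinAt
          (f := fun p : E3 × E3 × ℝ × ℝ => (p.2.1, gam R p.2.2.2 p.2.2.1 ω₀ s))
          (g := fun q : E3 × E3 => rotTo ω₀ q.1 q.2) (continuousAt_rotTo hω₀0)
          ((by fun_prop : ContinuousWithinAt (fun p : E3 × E3 × ℝ × ℝ => p.2.1) D
            (x₀, ω₀, E₁, t₁)).prodMk hgam)
      refine ContinuousWithinAt.comp (t := K ×ˢ sphere (0 : E3) 1 ×ˢ Set.Icc E₀ Em)
        (f := fun p : E3 × E3 × ℝ × ℝ => ((p.1, J p s, p.2.2.2) : E3 × E3 × ℝ))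
        (g := fun p : E3 × E3 × ℝ => ψ p.1 p.2.1 p.2.2) (hψc _ ?_) ?_ ?_
      · exact ⟨hx₀, hJmem _ hp₀ s, hE₁.trans hEt₁, ht₁⟩
      · exact ContinuousWithinAt.prodMk (by fun_prop) (hJc.prodMk (by fun_prop))
      · exact fun p hp => ⟨hp.1, hJmem p hp s, hp.2.2.1.trans hp.2.2.2.1, hp.2.2.2.2⟩
  · filter_upwards [hne, hD_ev] with p hp0 hp using hEq p hp hp0

/-- Hölder continuity of the circle integral at coinciding energies. -/
theorem abs_integral_gam_sub_le
    (hψc : ContinuousOn (fun p : E3 × E3 × ℝ => ψ p.1 p.2.1 p.2.2)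
      (K ×ˢ sphere (0 : E3) 1 ×ˢ Set.Icc E₀ Em)) (hE₀ : 0 < E₀) {α β Cα Cβ : ℝ} (hα : 0 < α)
    (hψα : ∀ x ∈ K, ∀ E ∈ Set.Icc E₀ Em, ∀ ω₁ ∈ sphere (0 : E3) 1,
      ∀ ω₂ ∈ sphere (0 : E3) 1, |ψ x ω₁ E - ψ x ω₂ E| ≤ Cα * ‖ω₁ - ω₂‖ ^ α)
    (hψβ : ∀ x ∈ K, ∀ ω ∈ sphere (0 : E3) 1, ∀ E₁ ∈ Set.Icc E₀ Em,
      ∀ E₂ ∈ Set.Icc E₀ Em, |ψ x ω E₁ - ψ x ω E₂| ≤ Cβ * |E₁ - E₂| ^ β)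
    {R : E3 → (E3 ≃ₗᵢ[ℝ] E3)} {ω : E3} (hω : ω ∈ sphere (0 : E3) 1) (hR : R ω e₃ = ω)
    {x : E3} (hx : x ∈ K) {E t : ℝ} (hE : E₀ ≤ E) (hEt : E ≤ t) (ht : t ≤ Em) :
    |(∫ s in (0 : ℝ)..(2 * π), ψ x (gam R t E ω s) t) - 2 * π * ψ x ω E| ≤
      (|Cα| * (2 / E₀ * (t - E)) ^ (α / 2) + |Cβ| * (t - E) ^ β) * (2 * π) := by
  have hE0 := hE₀.trans_le hE
  have hd : 0 ≤ t - E := sub_nonneg.2 hEt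
  have hEmem : E ∈ Icc E₀ Em := ⟨hE, hEt.trans ht⟩
  have htmem : t ∈ Icc E₀ Em := ⟨hE.trans hEt, ht⟩
  have hcont := continuous_comp_gam hψc hE₀ R hx ω hE hEt ht
  have h1 : (∫ s in (0 : ℝ)..(2 * π), ψ x (gam R t E ω s) t) - 2 * π * ψ x ω E =
      ∫ s in (0 : ℝ)..(2 * π), (ψ x (gam R t E ω s) t - ψ x ω E) := by
    rw [intervalIntegral.integral_sub (hcont.intervalIntegrable _ _) intervalIntegrable_const,
      intervalIntegral.integral_const, sub_zero, smul_eq_mul]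
  have h2 : ∀ s, |ψ x (gam R t E ω s) t - ψ x ω E| ≤
      |Cα| * (2 / E₀ * (t - E)) ^ (α / 2) + |Cβ| * (t - E) ^ β := fun s => by
    refine (abs_sub_le _ (ψ x ω t) _).trans (add_le_add ?_ ?_)
    · refine (hψα x hx t htmem _ ?_ ω hω).trans ?_
      · rw [mem_sphere_zero_iff_norm, norm_gam R ω hE0 hEt]
      · have h3 : ‖gam R t E ω s - ω‖ ^ α ≤ (2 / E₀ * (t - E)) ^ (α / 2) := by
          refine (Real.rpow_le_rpow (norm_nonneg _) (norm_gam_sub_le hR hE₀ hE hEt s)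
            hα.le).trans_eq ?_
          rw [← Real.rpow_mul (by positivity)]
          congr 1
          ring
        exact mul_le_mul (le_abs_self _) h3 (by positivity) (abs_nonneg _)
    · refine (hψβ x hx ω hω t htmem E hEmem).trans ?_
      rw [abs_of_nonneg hd]
      exact mul_le_mul_of_nonneg_right (le_abs_self _) (by positivity)
  rw [h1]
  have h3 := intervalIntegral.norm_integral_le_of_norm_le_const (a := 0) (b := 2 * π)
    (f := fun s => ψ x (gam R t E ω s) t - ψ x ω E) fun s _ => h2 s
  rwa [sub_zero, abs_of_pos Real.two_pi_pos, Real.norm_eq_abs] at h3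

end CircleAverage
/-- for `σ̂₁ ∈ C(Ḡ×I, C¹(I'))` and
`ψ ∈ C(Ḡ×I, C^α(S)) ∩ C(Ḡ×S, C^β(I))`, there exists `u ∈ C(Ḡ×S×I)` with
`p.f.∫_E^{E_m} σ̂₁(x,E',E)( ∫_0^{2π} ψ(x,γ(E',E,ω)(s),E') ds )/(E'−E) dE'
  = 2π·log(E_m−E)·σ̂₁(x,E,E)·ψ(x,ω,E) + u(x,ω,E)`. -/
theorem stmt11 (G : Set E3) (hGopen : IsOpen G) (hGbdd : Bornology.IsBounded G)
    (E₀ Em α β : ℝ) (hE₀ : 0 < E₀) (hI : E₀ < Em)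
    (hα : 0 < α) (hα1 : α < 1) (hβ : 0 < β) (hβ1 : β < 1)
    (σ₁ σ₁' : E3 → ℝ → ℝ → ℝ)
    (hσc : ContinuousOn (fun p : E3 × ℝ × ℝ => σ₁ p.1 p.2.1 p.2.2)
      (closure G ×ˢ Set.Icc E₀ Em ×ˢ Set.Icc E₀ Em))
    (hσd : ∀ x ∈ closure G, ∀ E ∈ Set.Icc E₀ Em, ∀ E' ∈ Set.Icc E₀ Em,
      HasDerivWithinAt (fun s => σ₁ x s E) (σ₁' x E' E) (Set.Icc E₀ Em) E')
    (hσ'c : ContinuousOn (fun p : E3 × ℝ × ℝ => σ₁' p.1 p.2.1 p.2.2)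
      (closure G ×ˢ Set.Icc E₀ Em ×ˢ Set.Icc E₀ Em))
    (ψ : E3 → E3 → ℝ → ℝ) (Cα Cβ : ℝ)
    (hψc : ContinuousOn (fun p : E3 × E3 × ℝ => ψ p.1 p.2.1 p.2.2)
      (closure G ×ˢ sphere (0 : E3) 1 ×ˢ Set.Icc E₀ Em))
    (hψα : ∀ x ∈ closure G, ∀ E ∈ Set.Icc E₀ Em, ∀ ω₁ ∈ sphere (0 : E3) 1,
      ∀ ω₂ ∈ sphere (0 : E3) 1, |ψ x ω₁ E - ψ x ω₂ E| ≤ Cα * ‖ω₁ - ω₂‖ ^ α)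
    (hψβ : ∀ x ∈ closure G, ∀ ω ∈ sphere (0 : E3) 1, ∀ E₁ ∈ Set.Icc E₀ Em,
      ∀ E₂ ∈ Set.Icc E₀ Em, |ψ x ω E₁ - ψ x ω E₂| ≤ Cβ * |E₁ - E₂| ^ β)
    (R : E3 → (E3 ≃ₗᵢ[ℝ] E3)) (hR : ∀ ω : E3, ‖ω‖ = 1 → R ω e₃ = ω) :
    ∃ u : E3 → E3 → ℝ → ℝ,
      ContinuousOn (fun p : E3 × E3 × ℝ => u p.1 p.2.1 p.2.2)
        (closure G ×ˢ sphere (0 : E3) 1 ×ˢ Set.Icc E₀ Em) ∧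
      ∀ x ∈ closure G, ∀ ω ∈ sphere (0 : E3) 1, ∀ E ∈ Set.Ico E₀ Em,
        HasPF1Upper
          (fun E' => σ₁ x E' E * ∫ s in (0:ℝ)..(2 * π), ψ x (gam R E' E ω s) E') E Em
          (2 * π * Real.log (Em - E) * σ₁ x E E * ψ x ω E + u x ω E) := by
  have hK : IsCompact (closure G) := hGbdd.isCompact_closure
  obtain ⟨M, hM⟩ := (hK.prod (isCompact_Icc.prod isCompact_Icc)).exists_bound_of_continuousOn hσc
  obtain ⟨M', hM'⟩ :=
    (hK.prod (isCompact_Icc.prod isCompact_Icc)).exists_bound_of_continuousOn hσ'c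
  obtain ⟨N, hN⟩ :=
    (hK.prod ((isCompact_sphere (0 : E3) 1).prod isCompact_Icc)).exists_bound_of_continuousOn hψc
  have hN' : ∀ x ∈ closure G, ∀ ω ∈ sphere (0 : E3) 1, ∀ E ∈ Icc E₀ Em, |ψ x ω E| ≤ N :=
    fun x hx ω hω E hE => hN (x, ω, E) ⟨hx, hω, hE⟩
  set g : E3 → E3 → ℝ → ℝ → ℝ := fun x ω E t =>
    σ₁ x t E * ∫ s in (0:ℝ)..(2 * π), ψ x (gam R t E ω s) t with hg
  have hgE : ∀ x, ∀ ω ∈ sphere (0 : E3) 1, ∀ E ∈ Icc E₀ Em,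
      g x ω E E = σ₁ x E E * (2 * π * ψ x ω E) := fun x ω hω E hE => by
    simp only [hg, gam_self (hR ω (mem_sphere_zero_iff_norm.1 hω)) (hE₀.trans_le hE.1),
      intervalIntegral.integral_const, sub_zero, smul_eq_mul]
  have hline : ∀ E ∈ Icc E₀ Em, ∀ r ∈ Ioc (0 : ℝ) 1,
      E ≤ E + r * (Em - E) ∧ E + r * (Em - E) ≤ Em := fun E hE r hr => by
    have := sub_nonneg.2 hE.2
    exact ⟨by nlinarith [hr.1], by nlinarith [hr.2]⟩
  have hgc : ContinuousOn (fun p : E3 × E3 × ℝ × ℝ => g p.1 p.2.1 p.2.2.1 p.2.2.2)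
      {p | p.1 ∈ closure G ∧ p.2.1 ∈ sphere (0 : E3) 1 ∧ E₀ ≤ p.2.2.1 ∧ p.2.2.1 ≤ p.2.2.2 ∧
        p.2.2.2 ≤ Em} := by
    refine ContinuousOn.mul ?_ (continuousOn_integral_gam hψc hE₀ hN' R hR)
    exact hσc.comp (f := fun p : E3 × E3 × ℝ × ℝ => ((p.1, p.2.2.2, p.2.2.1) : E3 × ℝ × ℝ))
      (by fun_prop) fun p hp => ⟨hp.1, ⟨hp.2.2.1.trans hp.2.2.2.1, hp.2.2.2.2⟩,
        hp.2.2.1, hp.2.2.2.1.trans hp.2.2.2.2⟩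
  set B : ℝ → ℝ := fun r => M' * (Em - E₀) * (N * (2 * π)) +
    M * (2 * π) * (|Cα| * (2 / E₀ * (Em - E₀)) ^ (α / 2)) * r ^ (α / 2 - 1) +
    M * (2 * π) * (|Cβ| * (Em - E₀) ^ β) * r ^ (β - 1) with hB
  have hBint : IntervalIntegrable B volume 0 1 :=
    (intervalIntegrable_const.add
      ((intervalIntegral.intervalIntegrable_rpow' (by linarith)).const_mul _)).add
      ((intervalIntegral.intervalIntegrable_rpow' (by linarith)).const_mul _)
  have hbound : ∀ x ∈ closure G, ∀ ω ∈ sphere (0 : E3) 1, ∀ E ∈ Icc E₀ Em, ∀ r ∈ Ioc (0 : ℝ) 1,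
      ‖(g x ω E (E + r * (Em - E)) - g x ω E E) / r‖ ≤ B r := by
    intro x hx ω hω E hE r hr
    obtain ⟨hEt, ht⟩ := hline E hE r hr
    set t := E + r * (Em - E) with htdef
    have hr0 := hr.1
    have htmem : t ∈ Icc E₀ Em := ⟨hE.1.trans hEt, ht⟩
    have hD : 0 < Em - E₀ := sub_pos.2 hI
    have htE0 : 0 ≤ t - E := sub_nonneg.2 hEt
    have htE : t - E ≤ r * (Em - E₀) := by
      rw [htdef, add_sub_cancel_left]
      exact mul_le_mul_of_nonneg_left (by linarith [hE.1]) hr0.le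
    have hM0 : 0 ≤ M := (norm_nonneg _).trans (hM (x, E, E) ⟨hx, hE, hE⟩)
    have hM'0 : 0 ≤ M' := (norm_nonneg _).trans (hM' (x, E, E) ⟨hx, hE, hE⟩)
    have hN0 : 0 ≤ N := (norm_nonneg _).trans (hN (x, ω, E) ⟨hx, hω, hE⟩)
    have hσ : |σ₁ x t E - σ₁ x E E| ≤ M' * (r * (Em - E₀)) := by
      have h := (convex_Icc E₀ Em).norm_image_sub_le_of_norm_hasDerivWithin_le
        (f := fun s => σ₁ x s E) (f' := fun s => σ₁' x s E) (hσd x hx E hE)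
        (fun s hs => hM' (x, s, E) ⟨hx, hs, hE⟩) hE htmem
      rw [Real.norm_eq_abs, Real.norm_eq_abs, abs_of_nonneg htE0] at h
      exact h.trans (mul_le_mul_of_nonneg_left htE hM'0)
    have hint : |∫ s in (0:ℝ)..(2 * π), ψ x (gam R t E ω s) t| ≤ N * (2 * π) := by
      have h := intervalIntegral.norm_integral_le_of_norm_le_const (a := 0) (b := 2 * π)
        (f := fun s => ψ x (gam R t E ω s) t) fun s _ => hN' x hx _
          (mem_sphere_zero_iff_norm.2 (norm_gam R ω (hE₀.trans_le hE.1) hEt s)) t htmem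
      rwa [sub_zero, abs_of_pos Real.two_pi_pos, Real.norm_eq_abs] at h
    have hhol := abs_integral_gam_sub_le hψc hE₀ hα hψα hψβ hω
      (hR ω (mem_sphere_zero_iff_norm.1 hω)) hx hE.1 hEt ht
    have hα' : (2 / E₀ * (t - E)) ^ (α / 2) ≤ (2 / E₀ * (Em - E₀)) ^ (α / 2) * r ^ (α / 2) := by
      rw [← Real.mul_rpow (by positivity) hr0.le]
      refine Real.rpow_le_rpow (by positivity) ?_ (by positivity)
      calc 2 / E₀ * (t - E) ≤ 2 / E₀ * (r * (Em - E₀)) := by gcongr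
        _ = 2 / E₀ * (Em - E₀) * r := by ring
    have hβ' : (t - E) ^ β ≤ (Em - E₀) ^ β * r ^ β := by
      rw [← Real.mul_rpow hD.le hr0.le]
      exact Real.rpow_le_rpow htE0 (htE.trans_eq (mul_comm _ _)) hβ.le
    have hsplit : g x ω E t - g x ω E E =
        (σ₁ x t E - σ₁ x E E) * (∫ s in (0:ℝ)..(2 * π), ψ x (gam R t E ω s) t) +
          σ₁ x E E * ((∫ s in (0:ℝ)..(2 * π), ψ x (gam R t E ω s) t) - 2 * π * ψ x ω E) := by
      rw [hgE x ω hω E hE]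
      simp only [hg]
      ring
    rw [norm_div, Real.norm_eq_abs, Real.norm_eq_abs, abs_of_pos hr0, div_le_iff₀ hr0, hsplit]
    calc _ ≤ M' * (r * (Em - E₀)) * (N * (2 * π)) +
          M * ((|Cα| * ((2 / E₀ * (Em - E₀)) ^ (α / 2) * r ^ (α / 2)) +
            |Cβ| * ((Em - E₀) ^ β * r ^ β)) * (2 * π)) := by
          refine (abs_add_le _ _).trans ?_
          rw [abs_mul, abs_mul]
          refine add_le_add (mul_le_mul hσ hint (abs_nonneg _) (by positivity))
            (mul_le_mul (hM (x, E, E) ⟨hx, hE, hE⟩) (hhol.trans ?_) (abs_nonneg _) hM0)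
          gcongr
      _ = B r * r := by
          simp only [hB]
          rw [Real.rpow_sub_one hr0.ne', Real.rpow_sub_one hr0.ne']
          field_simp
          ring
  have hmeas : ∀ x ∈ closure G, ∀ ω ∈ sphere (0 : E3) 1, ∀ E ∈ Icc E₀ Em,
      AEStronglyMeasurable (fun r => (g x ω E (E + r * (Em - E)) - g x ω E E) / r)
        (volume.restrict (Set.uIoc 0 1)) := by
    intro x hx ω hω E hE
    rw [uIoc_of_le zero_le_one]
    refine ContinuousOn.aestronglyMeasurable ?_ measurableSet_Ioc
    refine ContinuousOn.div (ContinuousOn.sub ?_ continuousOn_const) continuousOn_id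
      fun r hr => hr.1.ne'
    exact hgc.comp (f := fun r : ℝ => ((x, ω, E, E + r * (Em - E)) : E3 × E3 × ℝ × ℝ))
      (by fun_prop) fun r hr => ⟨hx, hω, hE.1, (hline E hE r hr).1, (hline E hE r hr).2⟩
  refine ⟨fun x ω E => ∫ r in (0:ℝ)..1, (g x ω E (E + r * (Em - E)) - g x ω E E) / r, ?_, ?_⟩
  · intro p₀ hp₀
    refine intervalIntegral.continuousWithinAt_of_dominated_interval (bound := B) ?_ ?_ hBint ?_
    · filter_upwards [self_mem_nhdsWithin] with p hp using hmeas _ hp.1 _ hp.2.1 _ hp.2.2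
    · filter_upwards [self_mem_nhdsWithin] with p hp
      refine .of_forall fun r hr => ?_
      rw [uIoc_of_le zero_le_one] at hr
      exact hbound _ hp.1 _ hp.2.1 _ hp.2.2 r hr
    · refine .of_forall fun r hr => ?_
      rw [uIoc_of_le zero_le_one] at hr
      refine ContinuousWithinAt.div_const (ContinuousWithinAt.sub ?_ ?_) r
      · exact hgc.comp (f := fun p : E3 × E3 × ℝ =>
          ((p.1, p.2.1, p.2.2, p.2.2 + r * (Em - p.2.2)) : E3 × E3 × ℝ × ℝ)) (by fun_prop)
          (fun p hp => ⟨hp.1, hp.2.1, hp.2.2.1, hline _ hp.2.2 r hr⟩) p₀ hp₀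
      · exact hgc.comp (f := fun p : E3 × E3 × ℝ =>
          ((p.1, p.2.1, p.2.2, p.2.2) : E3 × E3 × ℝ × ℝ)) (by fun_prop)
          (fun p hp => ⟨hp.1, hp.2.1, hp.2.2.1, le_rfl, hp.2.2.2⟩) p₀ hp₀
  · intro x hx ω hω E hE
    have hE' := Ico_subset_Icc_self hE
    have hintegrable : IntervalIntegrable
        (fun r => (g x ω E (E + r * (Em - E)) - g x ω E E) / r) volume 0 1 := by
      refine hBint.mono_fun' (hmeas x hx ω hω E hE') ?_
      rw [uIoc_of_le zero_le_one]
      exact (ae_restrict_iff' measurableSet_Ioc).2 (.of_forall (hbound x hx ω hω E hE'))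
    have h := hasPF1Upper_of_intervalIntegrable hE.2 hintegrable
    have hL : 2 * π * Real.log (Em - E) * σ₁ x E E * ψ x ω E =
        g x ω E E * Real.log (Em - E) := by
      rw [hgE x ω hω E hE']
      ring
    rw [hL]
    exact h
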